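/- arXiv:1002.2816 — 2 statements merged into one kernel-verified Lean document; each statement's English description precedes it below -/
import Mathlib

section
/- Equip ℂ³ with the Hermitian sesquilinear form ⟨u, v⟩ = Σ_{a,b} conj(u_a)·G_{ab}·v_b, where G = [[1, 0, 0], [0, 1, 1/φ], [0, 1/φ, 1]]. Let ω = e^{iπ/5} and define v₁ = 5^{1/4}·(1+φ²)^{−1}·(φ, 1, 1), v₂ = (1+φ²)^{−1/2}·(1, φω^{−3}, φω^{3}), v₃ = (1+φ²)^{−1/2}·(1, φω^{3}, φω^{−3}). Then ⟨v_a, v_b⟩ = 1 if a = b and 0 otherwise; i.e., v₁, v₂, v₃ form an orthonormal basis of ℂ³ for this inner product. -/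
noncomputable section

open Complex

/-- The golden ratio φ = (1+√5)/2. -/
def φ : ℝ := (1 + Real.sqrt 5) / 2

/-- The Gram matrix of the ribbon-graph basis states ttI, S, S† of H^{(1,1)}. -/
def G : Matrix (Fin 3) (Fin 3) ℂ :=
  !![1, 0, 0; 0, 1, (1 / φ : ℝ); 0, (1 / φ : ℝ), 1]

/-- The Hermitian sesquilinear form with Gram matrix `G`. -/
def form (u v : Fin 3 → ℂ) : ℂ :=
  ∑ a : Fin 3, ∑ b : Fin 3, (starRingEnd ℂ) (u a) * G a b * v b

/-- ω = e^{iπ/5}. -/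
def ω : ℂ := Complex.exp (Real.pi * Complex.I / 5)

/-- The coefficient vectors of the anyonic fusion basis states τ⊗τ, 1⊗τ, τ⊗1 of
H^{(1,1)} in the ribbon-graph basis. -/
def v : Fin 3 → (Fin 3 → ℂ) :=
  ![(((5 : ℝ) ^ ((1 : ℝ)/4) * (1 + φ ^ 2)⁻¹ : ℝ) : ℂ) • ![(φ : ℂ), 1, 1],
    ((((Real.sqrt (1 + φ ^ 2))⁻¹ : ℝ)) : ℂ) • ![1, (φ : ℂ) * ω ^ (-3 : ℤ), (φ : ℂ) * ω ^ (3 : ℤ)],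
    ((((Real.sqrt (1 + φ ^ 2))⁻¹ : ℝ)) : ℂ) • ![1, (φ : ℂ) * ω ^ (3 : ℤ), (φ : ℂ) * ω ^ (-3 : ℤ)]]

/-! Each of the three vectors is a real multiple of some `(a, conj z, z)` with `a` real, so all
their inner products are real. Besides `φ² = φ + 1`, orthogonality only uses that `z = ω³` has
modulus `1` and `2 Re z = 2 cos (3π/5) = 1 - φ`; then `2 Re z² = -φ`. The squared length of
`(φ, 1, 1)` is `√5 φ²`, which its prefactor cancels because `1 + φ² = √5 φ`. -/

open scoped ComplexConjugate

theorem φ_sq : φ ^ 2 = φ + 1 := Real.goldenRatio_sq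

theorem φ_ne_zero : φ ≠ 0 := Real.goldenRatio_ne_zero

theorem inv_φ : φ⁻¹ = φ - 1 :=
  inv_eq_of_mul_eq_one_right (by linear_combination φ_sq)

theorem sqrt_five_eq : √5 = 2 * φ - 1 := by
  rw [φ]
  ring

theorem one_add_φ_sq : 1 + φ ^ 2 = √5 * φ := by
  rw [sqrt_five_eq]
  linear_combination -φ_sq

theorem ω_eq_exp_mul_I : ω = exp ((Real.pi / 5 : ℝ) * I) := by
  rw [ω]
  congr 1
  push_cast
  ring

theorem norm_ω_pow (n : ℕ) : ‖ω ^ n‖ = 1 := by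
  rw [norm_pow, ω_eq_exp_mul_I, norm_exp_ofReal_mul_I, one_pow]

theorem re_ω_pow (n : ℕ) : (ω ^ n).re = Real.cos (n * (Real.pi / 5)) := by
  rw [ω_eq_exp_mul_I, ← exp_nat_mul, ← mul_assoc, ← ofReal_natCast, ← ofReal_mul,
    exp_ofReal_mul_I_re]

theorem two_mul_re_ω_cube : 2 * (ω ^ 3).re = 1 - φ := by
  have cos_eq : Real.cos (Real.pi / 5) = φ / 2 := by
    rw [Real.cos_pi_div_five, φ]
    ring
  rw [re_ω_pow, Nat.cast_ofNat, Real.cos_three_mul, cos_eq]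
  linear_combination (φ + 1) * φ_sq

theorem form_smul_smul (c d : ℂ) (u w : Fin 3 → ℂ) :
    form (c • u) (d • w) = conj c * d * form u w := by
  simp only [form, Pi.smul_apply, smul_eq_mul, map_mul, Finset.mul_sum]
  exact Finset.sum_congr rfl fun a _ ↦ Finset.sum_congr rfl fun b _ ↦ by ring

theorem conj_form (u w : Fin 3 → ℂ) : conj (form u w) = form w u := by
  have conj_G (a b : Fin 3) : conj (G a b) = G b a := by
    fin_cases a <;> fin_cases b <;> simp [G]
  simp only [form, map_sum, map_mul, conj_conj, conj_G]
  rw [Finset.sum_comm]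
  exact Finset.sum_congr rfl fun a _ ↦ Finset.sum_congr rfl fun b _ ↦ by ring

theorem form_eq_zero_comm {u w : Fin 3 → ℂ} : form u w = 0 ↔ form w u = 0 := by
  rw [← conj_form u w, map_eq_zero]

theorem form_inv_sqrt_smul_self {u : Fin 3 → ℂ} {r : ℝ} (hr : 0 < r) (hu : form u u = r) :
    form ((((√r)⁻¹ : ℝ) : ℂ) • u) ((((√r)⁻¹ : ℝ) : ℂ) • u) = 1 := by
  have normalization : (√r)⁻¹ ^ 2 * r = 1 := by
    rw [inv_pow, Real.sq_sqrt hr.le, inv_mul_cancel₀ hr.ne']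
  rw [form_smul_smul, hu, conj_ofReal, ← sq]
  exact_mod_cast normalization

/-- The vectors with real coefficient `a` on `ttI` and conjugate coefficients on `S` and `S†`, that
is, the fixed points of the antiunitary involution exchanging `S` and `S†`. The parameter `z` is the
coefficient of `S†`. -/
def conjSymmVec (a : ℝ) (z : ℂ) : Fin 3 → ℂ := ![a, conj z, z]

theorem form_conjSymmVec (a b : ℝ) (z w : ℂ) :
    form (conjSymmVec a z) (conjSymmVec b w) =
      (a * b + 2 * (z * conj w).re + 2 * φ⁻¹ * (z * w).re : ℝ) := by
  have two_re_mul_conj : (2 * (z * conj w).re : ℂ) = z * conj w + conj z * w := by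
    rw [← ofReal_ofNat, ← ofReal_mul, ← add_conj, map_mul, conj_conj]
  have two_re_mul : (2 * (z * w).re : ℂ) = z * w + conj z * conj w := by
    rw [← ofReal_ofNat, ← ofReal_mul, ← add_conj, map_mul]
  have expand : form (conjSymmVec a z) (conjSymmVec b w) =
      a * b + (z * conj w + conj z * w) + φ⁻¹ * (z * w + conj z * conj w) := by
    simp [form, G, conjSymmVec, Fin.sum_univ_three]
    ring
  rw [expand, ← two_re_mul_conj, ← two_re_mul]
  push_cast
  ring

theorem form_conjSymmVec_φ_one_self :
    form (conjSymmVec φ 1) (conjSymmVec φ 1) = (√5 * φ ^ 2 : ℝ) := by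
  rw [form_conjSymmVec, inv_φ, sqrt_five_eq, map_one, mul_one, one_re]
  congr 1
  linear_combination -2 * φ * φ_sq

theorem form_conjSymmVec_φ_one_one_φ_mul {z : ℂ} (hre : 2 * z.re = 1 - φ) :
    form (conjSymmVec φ 1) (conjSymmVec 1 (φ * z)) = 0 := by
  rw [form_conjSymmVec, inv_φ, one_mul, one_mul, conj_re, re_ofReal_mul, ofReal_eq_zero]
  linear_combination φ ^ 2 * hre - φ * φ_sq

theorem form_conjSymmVec_one_φ_mul (z w : ℂ) :
    form (conjSymmVec 1 (φ * z)) (conjSymmVec 1 (φ * w)) =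
      (1 + 2 * φ ^ 2 * (z * conj w).re + 2 * φ * (z * w).re : ℝ) := by
  have re_mul_conj : (φ * z * conj (φ * w)).re = φ ^ 2 * (z * conj w).re := by
    rw [map_mul, conj_ofReal, mul_mul_mul_comm, ← ofReal_mul, re_ofReal_mul, sq]
  have re_mul : (φ * z * (φ * w)).re = φ ^ 2 * (z * w).re := by
    rw [mul_mul_mul_comm, ← ofReal_mul, re_ofReal_mul, sq]
  rw [form_conjSymmVec, re_mul_conj, re_mul]
  congr 1
  field_simp [φ_ne_zero]

theorem two_mul_re_mul_self {z : ℂ} (hz : ‖z‖ = 1) (hre : 2 * z.re = 1 - φ) :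
    2 * (z * z).re = -φ := by
  have re_sq_add_im_sq : z.re * z.re + z.im * z.im = 1 := by
    rw [← normSq_apply, normSq_eq_norm_sq, hz, one_pow]
  rw [mul_re]
  linear_combination (2 * z.re + 1 - φ) * hre - 2 * re_sq_add_im_sq + φ_sq

theorem re_mul_conj_of_norm_eq_one {z : ℂ} (hz : ‖z‖ = 1) : (z * conj z).re = 1 := by
  rw [mul_conj, normSq_eq_norm_sq, hz, one_pow, ofReal_re]

theorem form_conjSymmVec_one_φ_mul_self {z : ℂ} (hz : ‖z‖ = 1) (hre : 2 * z.re = 1 - φ) :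
    form (conjSymmVec 1 (φ * z)) (conjSymmVec 1 (φ * z)) = (1 + φ ^ 2 : ℝ) := by
  rw [form_conjSymmVec_one_φ_mul, re_mul_conj_of_norm_eq_one hz]
  congr 1
  linear_combination φ * two_mul_re_mul_self hz hre

theorem form_conjSymmVec_one_φ_mul_conj {z : ℂ} (hz : ‖z‖ = 1) (hre : 2 * z.re = 1 - φ) :
    form (conjSymmVec 1 (φ * z)) (conjSymmVec 1 (φ * conj z)) = 0 := by
  rw [form_conjSymmVec_one_φ_mul, conj_conj, re_mul_conj_of_norm_eq_one hz, ofReal_eq_zero]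
  linear_combination φ ^ 2 * two_mul_re_mul_self hz hre - (φ + 1) * φ_sq

theorem conj_ω_cube : conj (ω ^ 3) = ω ^ (-3 : ℤ) := by
  rw [← inv_eq_conj (norm_ω_pow 3), zpow_neg]
  rfl

theorem v_zero : v 0 = ((5 ^ ((1 : ℝ) / 4) * (1 + φ ^ 2)⁻¹ : ℝ) : ℂ) • conjSymmVec φ 1 := by
  rw [conjSymmVec, map_one]
  rfl

theorem v_one : v 1 = (((√(1 + φ ^ 2))⁻¹ : ℝ) : ℂ) • conjSymmVec 1 (φ * ω ^ 3) := by
  rw [conjSymmVec, map_mul, conj_ofReal, conj_ω_cube, ofReal_one]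
  rfl

theorem v_two : v 2 = (((√(1 + φ ^ 2))⁻¹ : ℝ) : ℂ) • conjSymmVec 1 (φ * conj (ω ^ 3)) := by
  rw [conjSymmVec, map_mul, conj_conj, conj_ofReal, conj_ω_cube, ofReal_one]
  rfl

theorem five_rpow_quarter_sq : ((5 : ℝ) ^ ((1 : ℝ) / 4)) ^ 2 = √5 := by
  rw [← Real.rpow_mul_natCast (by norm_num), Real.sqrt_eq_rpow]
  norm_num

theorem form_v_zero_self : form (v 0) (v 0) = 1 := by
  have normalization : (5 ^ ((1 : ℝ) / 4) * (1 + φ ^ 2)⁻¹) ^ 2 * (√5 * φ ^ 2) = 1 := by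
    rw [mul_pow, five_rpow_quarter_sq, one_add_φ_sq]
    field_simp [φ_ne_zero]
  rw [v_zero, form_smul_smul, form_conjSymmVec_φ_one_self, conj_ofReal, ← sq]
  exact_mod_cast normalization

/-- v₁, v₂, v₃ form an orthonormal basis of ℂ³ for the inner product defined by `G`. -/
theorem fib_anyon_basis_orthonormal :
    ∀ a b : Fin 3, form (v a) (v b) = if a = b then 1 else 0 := by
  have hz : ‖ω ^ 3‖ = 1 := norm_ω_pow 3
  have hz_conj : ‖conj (ω ^ 3)‖ = 1 := by rw [norm_conj, hz]
  have hre : 2 * (ω ^ 3).re = 1 - φ := two_mul_re_ω_cube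
  have hre_conj : 2 * (conj (ω ^ 3)).re = 1 - φ := by rw [conj_re, hre]
  have form_one_self : form (v 1) (v 1) = 1 := by
    rw [v_one]
    exact form_inv_sqrt_smul_self (by positivity) (form_conjSymmVec_one_φ_mul_self hz hre)
  have form_two_self : form (v 2) (v 2) = 1 := by
    rw [v_two]
    exact form_inv_sqrt_smul_self (by positivity) (form_conjSymmVec_one_φ_mul_self hz_conj hre_conj)
  have form_zero_one : form (v 0) (v 1) = 0 := by
    rw [v_zero, v_one, form_smul_smul, form_conjSymmVec_φ_one_one_φ_mul hre, mul_zero]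
  have form_zero_two : form (v 0) (v 2) = 0 := by
    rw [v_zero, v_two, form_smul_smul, form_conjSymmVec_φ_one_one_φ_mul hre_conj, mul_zero]
  have form_one_two : form (v 1) (v 2) = 0 := by
    rw [v_one, v_two, form_smul_smul, form_conjSymmVec_one_φ_mul_conj hz hre, mul_zero]
  intro a b
  fin_cases a <;> fin_cases b <;>
    simp [form_v_zero_self, form_one_self, form_two_self, form_zero_one, form_zero_two,
      form_one_two, form_eq_zero_comm.1 form_zero_one, form_eq_zero_comm.1 form_zero_two,
      form_eq_zero_comm.1 form_one_two]

end
end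

section
/- The Fibonacci F-symbols and R-symbols satisfy the hexagon identity: for all labels k, i, j, ℓ, m, g ∈ {1, τ}, R^{ki}_m · F^{kim}_{ℓjg} · R^{kj}_g = Σ_n F^{ikm}_{ℓjn} · R^{kn}_ℓ · F^{jin}_{ℓkg}, where the sum runs over n ∈ {1, τ}. -/
noncomputable section

/-- A triple of Fibonacci labels (`false` = 1, `true` = τ) is admissible iff
the number of τ's among them is not exactly one. -/
def admissible (a b c : Bool) : Prop :=
  ((if a then 1 else 0) + (if b then 1 else 0) + (if c then 1 else 0) : ℕ) ≠ 1

instance : ∀ a b c : Bool, Decidable (admissible a b c) := by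
  intro a b c; unfold admissible; infer_instance

/-- The nontrivial 2×2 block of the Fibonacci F-move, indexed by labels. -/
def Mblock (m n : Bool) : ℝ :=
  if m then (if n then -(1 / φ) else 1 / Real.sqrt φ)
  else (if n then 1 / Real.sqrt φ else 1 / φ)

/-- The Fibonacci F-symbol F^{ijm}_{kℓn}. -/
def Fs (i j m k l n : Bool) : ℝ :=
  if admissible i j m ∧ admissible k l m ∧ admissible i l n ∧ admissible j k n then
    (if i = true ∧ j = true ∧ k = true ∧ l = true then Mblock m n else 1)
  else 0

end

noncomputable section

/-- The Fibonacci R-symbol R^{ij}_k. -/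
def Rs (i j k : Bool) : ℂ :=
  if i = true ∧ j = true then
    (if k then Complex.exp (-(3 * Real.pi * Complex.I) / 5)
     else Complex.exp (4 * Real.pi * Complex.I / 5))
  else 1

/-!
If one of the outer labels `i`, `j`, `k`, `ℓ` of `F^{ijm}_{kℓn}` is the vacuum, then only one choice
of `m` and `n` can be admissible, and there the F-symbol is `1` or `0` according to whether the
other three outer labels fuse. Hence the hexagon identity is immediate when `k`, `i` or `j` is the
vacuum, and when `ℓ` is the vacuum it reduces to `R^{ki}_j R^{kj}_i = R^{kk}_1`. When all four are
`τ` it is the 2×2 matrix identity `D M D = M T M` with `M` the block `Mblock`, `D = diag(r², r)`,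
`T = diag(1, r)` and `r = R^{ττ}_τ`, which follows from `r² + φ⁻¹ r + 1 = 0`. This quadratic says
that `r + r⁻¹ = 2 cos (3π/5) = -φ⁻¹`.
-/

theorem φ_eq_goldenRatio : φ = Real.goldenRatio := rfl

theorem inv_φ_sq_add_inv_φ : φ⁻¹ ^ 2 + φ⁻¹ = 1 := by
  rw [φ_eq_goldenRatio, Real.inv_goldenRatio]
  linear_combination Real.goldenConj_sq

theorem inv_sqrt_φ_sq : (√φ)⁻¹ ^ 2 = φ⁻¹ := by
  rw [inv_pow, φ_eq_goldenRatio, Real.sq_sqrt Real.goldenRatio_pos.le]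

theorem two_mul_cos_three_pi_div_five : 2 * Real.cos (3 * Real.pi / 5) = -φ⁻¹ := by
  have cos_pi_div_five : Real.cos (Real.pi / 5) = Real.goldenRatio / 2 := by
    rw [Real.cos_pi_div_five]
    ring
  calc 2 * Real.cos (3 * Real.pi / 5)
      = 2 * Real.cos (Real.pi - 2 * (Real.pi / 5)) := by ring_nf
    _ = 2 - Real.goldenRatio ^ 2 := by
      rw [Real.cos_pi_sub, Real.cos_two_mul, cos_pi_div_five]
      ring
    _ = -φ⁻¹ := by
      rw [φ_eq_goldenRatio, Real.inv_goldenRatio, Real.goldenRatio_sq,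
        ← Real.one_sub_goldenConj]
      ring

section Quadratic

variable {A : Type*} [CommRing A] {p r : A}

theorem pow_three_eq_of_quadratic (hp : p ^ 2 + p = 1) (hr : r ^ 2 + p * r + 1 = 0) :
    r ^ 3 = p * (1 - r) := by
  linear_combination (r - p) * hr + r * hp

theorem pow_four_eq_of_quadratic (hp : p ^ 2 + p = 1) (hr : r ^ 2 + p * r + 1 = 0) :
    r ^ 4 = p + r := by
  linear_combination r * pow_three_eq_of_quadratic hp hr - p * hr + r * hp

end Quadratic

theorem exp_mul_I_sq_sub_two_cos_mul_add_one (θ : ℂ) :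
    Complex.exp (θ * Complex.I) ^ 2 - 2 * Complex.cos θ * Complex.exp (θ * Complex.I) + 1 = 0 := by
  have exp_mul_exp_neg : Complex.exp (θ * Complex.I) * Complex.exp (-θ * Complex.I) = 1 := by
    rw [← Complex.exp_add, neg_mul, add_neg_cancel, Complex.exp_zero]
  rw [Complex.two_cos]
  linear_combination -exp_mul_exp_neg

theorem Fs_vacuum_first (j m k l n : Bool) :
    Fs false j m k l n = if m = j ∧ n = l ∧ admissible j k l then 1 else 0 := by
  revert j m k l n; simp [Fs, admissible]

theorem Fs_vacuum_second (i m k l n : Bool) :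
    Fs i false m k l n = if m = i ∧ n = k ∧ admissible i k l then 1 else 0 := by
  revert i m k l n; simp [Fs, admissible]

theorem Fs_vacuum_third (i j m l n : Bool) :
    Fs i j m false l n = if m = l ∧ n = j ∧ admissible i j l then 1 else 0 := by
  revert i j m l n; simp [Fs, admissible]

theorem Fs_vacuum_fourth (i j m k n : Bool) :
    Fs i j m k false n = if m = k ∧ n = i ∧ admissible i j k then 1 else 0 := by
  revert i j m k n; simp [Fs, admissible]

theorem Fs_tau (m n : Bool) : Fs true true m true true n = Mblock m n := by
  revert m n; simp [Fs, admissible]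

theorem admissible_left_comm {a b c : Bool} : admissible a b c ↔ admissible b a c := by
  revert a b c; decide

theorem admissible_right_comm {a b c : Bool} : admissible a b c ↔ admissible a c b := by
  revert a b c; decide

/-- The instance of the hexagon identity at the labels `k i j l m g`, for the Fibonacci F-symbols
and an arbitrary family `R a b c` in the role of the R-symbols `R^{ab}_c`. -/
def HexagonEquation (R : Bool → Bool → Bool → ℂ) (k i j l m g : Bool) : Prop :=
  R k i m * (Fs k i m l j g : ℂ) * R k j g =
    ∑ n : Bool, (Fs i k m l j n : ℂ) * R k n l * (Fs j i n l k g : ℂ)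

/-- R-symbols for the Fibonacci fusion rules: braiding with the vacuum is trivial, and
`R^{ττ}_1 = r²` for a root `r = R^{ττ}_τ` of `X² + φ⁻¹ X + 1`. The two roots give the two mirror
image Fibonacci theories. Values at inadmissible triples are left free. -/
structure IsFibonacciBraiding (R : Bool → Bool → Bool → ℂ) : Prop where
  vacuum_left : ∀ a, R false a a = 1
  vacuum_right : ∀ a, R a false a = 1
  tau_tau_vacuum : R true true false = R true true true ^ 2
  tau_quadratic : R true true true ^ 2 + (φ : ℂ)⁻¹ * R true true true + 1 = 0

section Vacuum

variable {R : Bool → Bool → Bool → ℂ}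

theorem hexagonEquation_vacuum_k (hR : ∀ a, R false a a = 1) (i j l m g : Bool) :
    HexagonEquation R false i j l m g := by
  rw [HexagonEquation, Fintype.sum_eq_single l fun n hn ↦ by simp [Fs_vacuum_second, hn]]
  simp only [Fs_vacuum_first, Fs_vacuum_second, Fs_vacuum_fourth]
  grind [admissible_left_comm, admissible_right_comm, Complex.ofReal_zero, Complex.ofReal_one]

theorem hexagonEquation_vacuum_i (hR : ∀ a, R a false a = 1) (k j l m g : Bool) :
    HexagonEquation R k false j l m g := by
  rw [HexagonEquation, Fintype.sum_eq_single j fun n hn ↦ by simp [Fs_vacuum_first, hn]]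
  simp only [Fs_vacuum_first, Fs_vacuum_second]
  grind [admissible_left_comm, admissible_right_comm, Complex.ofReal_zero, Complex.ofReal_one]

theorem hexagonEquation_vacuum_j (hR : ∀ a, R a false a = 1) (k i l m g : Bool) :
    HexagonEquation R k i false l m g := by
  rw [HexagonEquation, Fintype.sum_eq_single i fun n hn ↦ by simp [Fs_vacuum_fourth, hn]]
  simp only [Fs_vacuum_first, Fs_vacuum_fourth]
  grind [admissible_left_comm, admissible_right_comm, Complex.ofReal_zero, Complex.ofReal_one]

end Vacuum

namespace IsFibonacciBraiding

variable {R : Bool → Bool → Bool → ℂ}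

theorem mul_eq_of_admissible (hR : IsFibonacciBraiding R) {k i j : Bool} (h : admissible k i j) :
    R k i j * R k j i = R k k false := by
  revert h
  cases k <;> cases i <;> cases j <;>
    simp [admissible, hR.vacuum_left, hR.vacuum_right, hR.tau_tau_vacuum, sq]

theorem hexagonEquation_vacuum_l (hR : IsFibonacciBraiding R) (k i j m g : Bool) :
    HexagonEquation R k i j false m g := by
  rw [HexagonEquation, Fintype.sum_eq_single k fun n hn ↦ by simp [Fs_vacuum_third, hn]]
  simp only [Fs_vacuum_third]
  grind [admissible_left_comm, admissible_right_comm, Complex.ofReal_zero, Complex.ofReal_one,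
    hR.mul_eq_of_admissible]

theorem hexagonEquation_tau (hR : IsFibonacciBraiding R) (m g : Bool) :
    HexagonEquation R true true true true m g := by
  have golden : (φ : ℂ)⁻¹ ^ 2 + (φ : ℂ)⁻¹ = 1 := mod_cast inv_φ_sq_add_inv_φ
  have inv_sqrt_sq : (√φ : ℂ)⁻¹ ^ 2 = (φ : ℂ)⁻¹ := mod_cast inv_sqrt_φ_sq
  have quadratic := hR.tau_quadratic
  have cube := pow_three_eq_of_quadratic golden quadratic
  have fourth := pow_four_eq_of_quadratic golden quadratic
  simp only [HexagonEquation, Fs_tau, Fintype.sum_bool, hR.vacuum_right true]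
  cases m <;> cases g <;>
    simp only [Mblock, hR.tau_tau_vacuum, if_true, if_false, Bool.false_eq_true] <;> push_cast
  · linear_combination (φ : ℂ)⁻¹ * fourth - R true true true * inv_sqrt_sq
  · linear_combination (√φ : ℂ)⁻¹ * cube
  · linear_combination (√φ : ℂ)⁻¹ * cube
  · linear_combination -(φ : ℂ)⁻¹ * quadratic - inv_sqrt_sq

end IsFibonacciBraiding

theorem Rs_tau_tau_tau :
    Rs true true true = Complex.exp ((-(3 * Real.pi / 5) : ℝ) * Complex.I) := by
  simp only [Rs, and_self, if_true]
  push_cast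
  ring_nf

theorem Rs_tau_tau_vacuum : Rs true true false = Rs true true true ^ 2 := by
  have angle : 4 * Real.pi * Complex.I / 5 =
      2 * ((-(3 * Real.pi / 5) : ℝ) * Complex.I) + 2 * Real.pi * Complex.I := by
    push_cast
    ring
  calc Rs true true false = Complex.exp (4 * Real.pi * Complex.I / 5) := by simp [Rs]
    _ = Complex.exp (2 * ((-(3 * Real.pi / 5) : ℝ) * Complex.I)) := by
      rw [angle, Complex.exp_periodic]
    _ = Rs true true true ^ 2 := by
      rw [Rs_tau_tau_tau, ← Complex.exp_nat_mul, Nat.cast_ofNat]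

theorem Rs_tau_quadratic :
    Rs true true true ^ 2 + (φ : ℂ)⁻¹ * Rs true true true + 1 = 0 := by
  have two_mul_cos : 2 * Complex.cos (-(3 * Real.pi / 5) : ℝ) = -(φ : ℂ)⁻¹ := by
    rw [← Complex.ofReal_cos, Real.cos_neg]
    exact_mod_cast two_mul_cos_three_pi_div_five
  have quadratic := exp_mul_I_sq_sub_two_cos_mul_add_one (-(3 * Real.pi / 5) : ℝ)
  rw [two_mul_cos] at quadratic
  rw [Rs_tau_tau_tau]
  linear_combination quadratic

theorem isFibonacciBraiding_Rs : IsFibonacciBraiding Rs where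
  vacuum_left _ := by simp [Rs]
  vacuum_right _ := by simp [Rs]
  tau_tau_vacuum := Rs_tau_tau_vacuum
  tau_quadratic := Rs_tau_quadratic

theorem fib_hexagon_general {R : Bool → Bool → Bool → ℂ} (hR : IsFibonacciBraiding R)
    (k i j l m g : Bool) : HexagonEquation R k i j l m g :=
  match k, i, j, l with
  | false, i, j, l => hexagonEquation_vacuum_k hR.vacuum_left i j l m g
  | k, false, j, l => hexagonEquation_vacuum_i hR.vacuum_right k j l m g
  | k, i, false, l => hexagonEquation_vacuum_j hR.vacuum_right k i l m g
  | k, i, j, false => hR.hexagonEquation_vacuum_l k i j m g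
  | true, true, true, true => hR.hexagonEquation_tau m g

/-- The Fibonacci F- and R-symbols satisfy the hexagon identity. -/
theorem fib_hexagon (k i j l m g : Bool) :
    Rs k i m * (Fs k i m l j g : ℂ) * Rs k j g =
      ∑ n : Bool, (Fs i k m l j n : ℂ) * Rs k n l * (Fs j i n l k g : ℂ) :=
  fib_hexagon_general isFibonacciBraiding_Rs k i j l m g

end
end
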